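/- Let M = cQ + εD ∈ 𝔻ℍ[t] be a bounded monic reduced motion polynomial of degree n with monic c ∈ ℝ[t], Q, D ∈ ℍ[t], mrpf(Q) = 1, and ν(M) = c²·ν(Q) = Nⁿ for some irreducible quadratic N ∈ ℝ[t]. Let g ∈ ℝ[t] be the greatest common monic real polynomial divisor of c, Q*·D, and D·Q*. If c·g divides D·D* in ℝ[t], then M admits a factorization into monic linear motion polynomial factors. -/

import Mathlib

open Polynomial DualNumber TrivSqZeroExt

noncomputable section

/-- The real quaternions. -/
abbrev Hq : Type := Quaternion ℝ

/-- The dual quaternions. -/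
abbrev DHq : Type := DualNumber Hq

/-- Conjugation of a dual quaternion: `(p + ε d)* = p* + ε d*`. -/
instance : Star DHq := ⟨fun x => inl (star x.fst) + inr (star x.snd)⟩

/-- Coefficient-wise (quaternion) conjugation of a polynomial. -/
def cstar {R : Type*} [Semiring R] [Star R] (A : R[X]) : R[X] :=
  A.sum fun n a => Polynomial.C (star a) * Polynomial.X ^ n

/-- The embedding `ℝ[t] → ℍ[t]`. -/
def qPoly (f : ℝ[X]) : Hq[X] := f.map (algebraMap ℝ Hq)

/-- The embedding `ℍ[t] → 𝔻ℍ[t]` (primal part). -/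
def dhQ (P : Hq[X]) : DHq[X] := P.map (inlHom Hq Hq)

/-- The embedding `ℝ[t] → 𝔻ℍ[t]`. -/
def dPoly (f : ℝ[X]) : DHq[X] := dhQ (qPoly f)

/-- The dual quaternion polynomial `P + ε D` with primal part `P` and dual part `D`. -/
def mp (P D : Hq[X]) : DHq[X] := dhQ P + Polynomial.C ε * dhQ D

/-- The primal part of a dual quaternion polynomial. -/
def primal (A : DHq[X]) : Hq[X] := A.map (fstHom ℝ Hq Hq).toRingHom

/-- A motion polynomial: a dual quaternion polynomial whose norm polynomial
`ν(M) = M·M*` is a nonzero real polynomial. -/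
def IsMotion (M : DHq[X]) : Prop := ∃ f : ℝ[X], f ≠ 0 ∧ M * cstar M = dPoly f

/-- A real polynomial divides a quaternion polynomial. -/
def RDvdQ (f : ℝ[X]) (A : Hq[X]) : Prop := ∃ B : Hq[X], A = qPoly f * B

/-- A real polynomial divides a dual quaternion polynomial. -/
def RDvdD (f : ℝ[X]) (A : DHq[X]) : Prop := ∃ B : DHq[X], A = dPoly f * B

/-- `g` is the greatest common monic real polynomial divisor of a quaternion polynomial `A`
(with itself), i.e. `g = mrpf A`. -/
def IsMrpfQ (g : ℝ[X]) (A : Hq[X]) : Prop :=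
  g.Monic ∧ RDvdQ g A ∧ ∀ f : ℝ[X], f.Monic → RDvdQ f A → f ∣ g

/-- `g` is the greatest common monic real polynomial divisor of `c ∈ ℝ[t]` and a quaternion
polynomial `A`, i.e. `g = mrpf(c, A)`. -/
def IsMrpf2 (g : ℝ[X]) (c : ℝ[X]) (A : Hq[X]) : Prop :=
  g.Monic ∧ g ∣ c ∧ RDvdQ g A ∧
    ∀ f : ℝ[X], f.Monic → f ∣ c → RDvdQ f A → f ∣ g

/-- `g` is the greatest common monic real polynomial divisor of `c ∈ ℝ[t]` and two quaternion
polynomials `A` and `B`, i.e. `g = mrpf(c, A, B)`. -/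
def IsMrpf3 (g : ℝ[X]) (c : ℝ[X]) (A B : Hq[X]) : Prop :=
  g.Monic ∧ g ∣ c ∧ RDvdQ g A ∧ RDvdQ g B ∧
    ∀ f : ℝ[X], f.Monic → f ∣ c → RDvdQ f A → RDvdQ f B → f ∣ g

/-- A quaternion polynomial is reduced: `mrpf = 1`, i.e. it has only constant real
polynomial factors. -/
def ReducedQ (A : Hq[X]) : Prop := ∀ f : ℝ[X], f.Monic → RDvdQ f A → f = 1

/-- A dual quaternion polynomial is reduced: `mrpf = 1`. -/
def ReducedD (A : DHq[X]) : Prop := ∀ f : ℝ[X], f.Monic → RDvdD f A → f = 1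

/-- Boundedness of a (monic reduced) motion polynomial: `mrpf` of its primal part has
no real root, equivalently no linear real polynomial `t - a` divides the primal part. -/
def BoundedD (M : DHq[X]) : Prop :=
  ∀ a : ℝ, ¬ RDvdQ (Polynomial.X - Polynomial.C a) (primal M)

/-- A generic motion polynomial: monic, a motion polynomial, with `mrpf` of the primal
part equal to `1`. -/
def GenericD (M : DHq[X]) : Prop :=
  M.Monic ∧ IsMotion M ∧ ReducedQ (primal M)

/-- The monic linear dual quaternion polynomial `t - p - ε d`. -/
def lin (p d : Hq) : DHq[X] := mp (Polynomial.X - Polynomial.C p) (-Polynomial.C d)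

/-- `M` admits a factorization into monic linear motion polynomial factors. -/
def HasLinFact (M : DHq[X]) : Prop :=
  ∃ L : List DHq, (∀ h ∈ L, IsMotion (Polynomial.X - Polynomial.C h)) ∧
    M = (L.map fun h => Polynomial.X - Polynomial.C h).prod

end

/-!
Linear factors are split off one at a time, by induction on the exponent `n` of the norm `N ^ n`.
After normalising `N`, write `c = N ^ m` and `g = N ^ j`. If `m = 0`, then `M` is linear with
invertible leading coefficient modulo `N`, which yields a linear right factor of norm `N`, and the
same applies to the cofactor. Let `m > 0`. If `N ∣ D`, the real factor `N = (t - p)(t - p)*` splits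
off from `M`. Otherwise `N ∣ D D*` gives `D = E (t - p)` with `(t - p)(t - p)* = N`, and `t - p` is
a right factor of `M`. If `N ^ (j + 1) ∤ D Q*`, the cofactor inherits the divisibility condition; if
`N ^ (j + 1) ∤ Q* D`, the same holds for `M*`. If both products are divisible, then `j = m` by
maximality of `j`, and conjugating `M` by a suitable translation `1 + ε u`, which does not affect
factorizability, destroys the divisibility of `D Q*`.
-/

section Conjugation

variable {R : Type*} [Semiring R] [StarRing R]

@[simp]
theorem coeff_cstar (A : R[X]) (n : ℕ) : (cstar A).coeff n = star (A.coeff n) := by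
  simp only [cstar, sum_def, finsetSum_coeff, coeff_C_mul_X_pow, Finset.sum_ite_eq]
  split_ifs with h
  · rfl
  · rw [notMem_support_iff.1 h, star_zero]

@[simp]
theorem cstar_cstar (A : R[X]) : cstar (cstar A) = A := by
  ext1 n; simp

@[simp]
theorem cstar_add (A B : R[X]) : cstar (A + B) = cstar A + cstar B := by
  ext1 n; simp

@[simp]
theorem cstar_mul (A B : R[X]) : cstar (A * B) = cstar B * cstar A := by
  ext1 n
  rw [coeff_cstar, coeff_mul, coeff_mul, star_sum, ← Finset.Nat.sum_antidiagonal_swap]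
  simp

@[simp]
theorem cstar_zero : cstar (0 : R[X]) = 0 := by
  ext1 n; simp

@[simp]
theorem cstar_C (a : R) : cstar (C a) = C (star a) := by
  ext1 n
  simp only [coeff_cstar, coeff_C, apply_ite star, star_zero]

@[simp]
theorem cstar_one : cstar (1 : R[X]) = 1 := by
  rw [← C_1, cstar_C, star_one]

@[simp]
theorem cstar_X : cstar (X : R[X]) = X := by
  ext1 n
  simp only [coeff_cstar, coeff_X, apply_ite star, star_zero, star_one]

theorem natDegree_cstar (A : R[X]) : (cstar A).natDegree = A.natDegree := by
  have h (B : R[X]) : (cstar B).natDegree ≤ B.natDegree :=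
    natDegree_le_iff_coeff_eq_zero.2 fun n hn => by
      rw [coeff_cstar, coeff_eq_zero_of_natDegree_lt hn, star_zero]
  exact (h A).antisymm (by simpa using h (cstar A))

theorem monic_cstar {A : R[X]} (hA : A.Monic) : (cstar A).Monic := by
  rw [Monic, leadingCoeff, natDegree_cstar, coeff_cstar, coeff_natDegree, hA.leadingCoeff, star_one]

theorem C_star_mul_C {a : R} (ha : a ∈ unitary R) : C (star a) * C a = 1 := by
  rw [← C_mul, Unitary.star_mul_self_of_mem ha, C_1]

theorem C_mul_C_star {a : R} (ha : a ∈ unitary R) : C a * C (star a) = 1 := by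
  rw [← C_mul, Unitary.mul_star_self_of_mem ha, C_1]

end Conjugation

theorem conj_mul_cstar_conj {R : Type*} [Semiring R] [StarRing R] {a : R} {A Z : R[X]}
    (ha : a ∈ unitary R) (hZ : Commute Z (C a)) (h : A * cstar A = Z) :
    C a * A * C (star a) * cstar (C a * A * C (star a)) = Z := by
  calc C a * A * C (star a) * cstar (C a * A * C (star a))
      = C a * (A * (C (star a) * C a) * cstar A) * C (star a) := by
        simp only [cstar_mul, cstar_C, star_star, mul_assoc]
    _ = Z := by rw [C_star_mul_C ha, mul_one, h, ← hZ.eq, mul_assoc, C_mul_C_star ha, mul_one]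

theorem monic_C_mul_mul_C {R : Type*} [Semiring R] {a b : R} {A : R[X]} (hab : a * b = 1)
    (hA : A.Monic) : (C a * A * C b).Monic := by
  refine monic_of_natDegree_le_of_coeff_eq_one A.natDegree ?_ ?_
  · exact (natDegree_mul_C_le _ _).trans (natDegree_C_mul_le _ _)
  · rw [coeff_mul_C, coeff_C_mul, hA.coeff_natDegree, mul_one, hab]

theorem mul_swap_eq_of_commute {S : Type*} [Semigroup S] {a b z : S} (ha : IsLeftRegular a)
    (hz : Commute z a) (h : a * b = z) : b * a = z :=
  ha <| by simp only [← mul_assoc, h, hz.eq]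

theorem dvd_mul_left_of_commute {S : Type*} [Semigroup S] {z a b : S} (hz : Commute z b)
    (h : z ∣ a) : z ∣ b * a := by
  obtain ⟨c, rfl⟩ := h
  exact ⟨b * c, by rw [← mul_assoc, ← hz.eq, mul_assoc]⟩

theorem mul_mul_cstar_mul {R : Type*} [Semiring R] [StarRing R] {A B Z : R[X]}
    (hZA : Commute Z A) (hB : B * cstar B = Z) :
    A * B * cstar (A * B) = Z * (A * cstar A) := by
  rw [cstar_mul, mul_assoc A, ← mul_assoc B, hB, ← mul_assoc, ← mul_assoc, hZA.eq]

section LinearFactor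

variable {R : Type*} [Ring R] [StarRing R] {Z A : R[X]}

@[simp]
theorem cstar_sub (A B : R[X]) : cstar (A - B) = cstar A - cstar B := by
  ext1 n; simp

theorem dvd_modByMonic_mul_cstar (hZc : ∀ B, Commute Z B) (hZs : cstar Z = Z)
    (hA : Z ∣ A * cstar A) : Z ∣ (A %ₘ Z) * cstar (A %ₘ Z) := by
  have hr : A %ₘ Z = A - Z * (A /ₘ Z) := eq_sub_of_add_eq (modByMonic_add_div A Z)
  have expand : (A %ₘ Z) * cstar (A %ₘ Z) =
      A * cstar A - (A * cstar (A /ₘ Z) * Z + Z * ((A /ₘ Z) * cstar (A %ₘ Z))) := by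
    rw [hr]
    simp only [cstar_sub, cstar_mul, hZs]
    noncomm_ring
  rw [expand, ← (hZc _).eq]
  exact dvd_sub hA (dvd_add (dvd_mul_right _ _) (dvd_mul_right _ _))

theorem coeff_one_modByMonic_ne_zero [IsDomain R] (hZ : Z.Monic) (hZ2 : Z.natDegree = 2)
    (hZc : ∀ B, Commute Z B) (hZs : cstar Z = Z) (hA : Z ∣ A * cstar A) (hZA : ¬ Z ∣ A) :
    (A %ₘ Z).coeff 1 ≠ 0 := by
  intro h1
  obtain ⟨b, hb⟩ : ∃ b, A %ₘ Z = C b := by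
    have hlt := degree_modByMonic_lt A hZ
    rw [degree_eq_natDegree hZ.ne_zero, hZ2] at hlt
    refine ⟨(A %ₘ Z).coeff 0, ?_⟩
    conv_lhs => rw [eq_X_add_C_of_degree_le_one (Order.le_of_lt_succ hlt), h1, C_0, zero_mul,
      zero_add]
  have hdvd := dvd_modByMonic_mul_cstar hZc hZs hA
  rw [hb, cstar_C, ← C_mul] at hdvd
  have hbb : b * star b = 0 := by
    by_contra hne
    refine hZ.not_dvd_of_natDegree_lt (C_ne_zero.2 hne) ?_ hdvd
    rw [natDegree_C, hZ2]
    exact two_pos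
  have hb0 : b = 0 := by simpa using hbb
  exact hZA ((modByMonic_eq_zero_iff_dvd hZ).1 (by rw [hb, hb0, C_0]))

/- Modulo `Z` the polynomial `A` is linear, `A ≡ a (t - h)`; comparing the norms modulo `Z` forces
`(t - h)(t - h)* = Z`, so `t - h` is a right factor of `Z` as well as of the remainder. -/
theorem exists_eq_mul_X_sub_C (hZ : Z.Monic) (hZ2 : Z.natDegree = 2) (hZc : ∀ B, Commute Z B)
    (hZs : cstar Z = Z) (hA : Z ∣ A * cstar A) (hlead : IsUnit ((A %ₘ Z).coeff 1)) :
    ∃ h E, (X - C h) * cstar (X - C h) = Z ∧ A = E * (X - C h) := by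
  nontriviality R
  obtain ⟨a, ha⟩ := hlead
  obtain ⟨h, hr⟩ : ∃ h, A %ₘ Z = C (a : R) * (X - C h) := by
    have hlt := degree_modByMonic_lt A hZ
    rw [degree_eq_natDegree hZ.ne_zero, hZ2] at hlt
    refine ⟨-((a⁻¹ : Rˣ) * (A %ₘ Z).coeff 0), ?_⟩
    conv_lhs => rw [eq_X_add_C_of_degree_le_one (Order.le_of_lt_succ hlt), ← ha]
    rw [mul_sub, ← C_mul, mul_neg, a.mul_inv_cancel_left, C_neg, sub_neg_eq_add]
  have hmonic : ((X - C h) * cstar (X - C h)).Monic :=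
    (monic_X_sub_C h).mul (monic_cstar (monic_X_sub_C h))
  have hdvd : Z ∣ (X - C h) * cstar (X - C h) := by
    have hrr := dvd_modByMonic_mul_cstar hZc hZs hA
    have hcancel : (X - C h) * cstar (X - C h) =
        C ((a⁻¹ : Rˣ) : R) * ((A %ₘ Z) * cstar (A %ₘ Z)) * C (star ((a⁻¹ : Rˣ) : R)) := by
      rw [hr, cstar_mul, cstar_C]
      simp only [mul_assoc, ← C_mul, ← star_mul]
      simp only [← mul_assoc, ← C_mul]
      simp
    rw [hcancel]
    exact (dvd_mul_left_of_commute (hZc _) hrr).mul_right _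
  have hnorm : (X - C h) * cstar (X - C h) = Z := by
    refine eq_of_monic_of_dvd_of_natDegree_le hZ hmonic hdvd ?_
    rw [(monic_X_sub_C h).natDegree_mul (monic_cstar (monic_X_sub_C h)), natDegree_cstar,
      natDegree_X_sub_C, hZ2]
  have hnorm' : cstar (X - C h) * (X - C h) = Z :=
    mul_swap_eq_of_commute (monic_X_sub_C h).isRegular.left (hZc _) hnorm
  refine ⟨h, C (a : R) + (A /ₘ Z) * cstar (X - C h), hnorm, ?_⟩
  rw [add_mul, mul_assoc, hnorm', ← (hZc _).eq, ← hr, modByMonic_add_div]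

end LinearFactor

theorem commute_map_algebraMap {S A : Type*} [CommSemiring S] [Semiring A] [Algebra S A]
    (f : S[X]) (B : A[X]) : Commute (f.map (algebraMap S A)) B :=
  letI := Polynomial.algebra S A
  Algebra.commutes f B

section RealPolynomial

variable {f : ℝ[X]} {A : Hq[X]}

theorem qPoly_commute (f : ℝ[X]) (A : Hq[X]) : Commute (qPoly f) A :=
  commute_map_algebraMap f A

@[simp]
theorem qPoly_one : qPoly 1 = 1 :=
  Polynomial.map_one _

theorem qPoly_mul (f g : ℝ[X]) : qPoly (f * g) = qPoly f * qPoly g :=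
  Polynomial.map_mul _

theorem qPoly_pow (f : ℝ[X]) (k : ℕ) : qPoly (f ^ k) = qPoly f ^ k :=
  Polynomial.map_pow _ k

theorem qPoly_injective : Function.Injective qPoly :=
  map_injective _ (algebraMap ℝ Hq).injective

theorem qPoly_ne_zero (hf : f ≠ 0) : qPoly f ≠ 0 :=
  (Polynomial.map_ne_zero_iff (algebraMap ℝ Hq).injective).2 hf

@[simp]
theorem cstar_qPoly (f : ℝ[X]) : cstar (qPoly f) = qPoly f := by
  ext1 n
  simp [qPoly]

theorem qPoly_dvd_mul_left (h : qPoly f ∣ A) (B : Hq[X]) : qPoly f ∣ B * A :=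
  dvd_mul_left_of_commute (qPoly_commute f B) h

theorem qPoly_dvd_cstar_iff : qPoly f ∣ cstar A ↔ qPoly f ∣ A := by
  have key {B : Hq[X]} (h : qPoly f ∣ B) : qPoly f ∣ cstar B := by
    obtain ⟨E, rfl⟩ := h
    rw [cstar_mul, cstar_qPoly]
    exact qPoly_dvd_mul_left dvd_rfl _
  exact ⟨fun h => cstar_cstar A ▸ key h, key⟩

theorem exists_eq_qPoly_of_cstar_eq (h : cstar A = A) : ∃ f, A = qPoly f := by
  have hreal (n : ℕ) : algebraMap ℝ Hq (A.coeff n).re = A.coeff n :=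
    (Quaternion.star_eq_self.1 (by rw [← coeff_cstar, h])).symm
  refine ⟨∑ i ∈ A.support, monomial i (A.coeff i).re, ?_⟩
  conv_lhs => rw [A.as_sum_support]
  simp only [qPoly, Polynomial.map_sum, map_monomial, hreal]

theorem exists_mul_cstar_eq_qPoly (A : Hq[X]) : ∃ f, A * cstar A = qPoly f :=
  exists_eq_qPoly_of_cstar_eq (by rw [cstar_mul, cstar_cstar])

theorem cstar_mul_self (A : Hq[X]) : cstar A * A = A * cstar A := by
  rcases eq_or_ne A 0 with rfl | hA
  · simp
  obtain ⟨f, hf⟩ := exists_mul_cstar_eq_qPoly A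
  rw [hf]
  exact mul_swap_eq_of_commute ((IsRegular.of_ne_zero hA).left) (qPoly_commute f A) hf

/- `A * B` and `B * A` have the same real part: both sides are central and agree after
multiplication by `A`. -/
theorem mul_add_cstar_mul_comm (A B : Hq[X]) :
    A * B + cstar (A * B) = B * A + cstar (B * A) := by
  rcases eq_or_ne A 0 with rfl | hA
  · simp
  obtain ⟨f, hf⟩ : ∃ f, A * B + cstar (A * B) = qPoly f :=
    exists_eq_qPoly_of_cstar_eq (by rw [cstar_add, cstar_cstar, add_comm])
  obtain ⟨g, hg⟩ := exists_mul_cstar_eq_qPoly A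
  refine mul_left_cancel₀ hA ?_
  calc A * (A * B + cstar (A * B)) = (A * B + cstar (A * B)) * A := by
        rw [hf, (qPoly_commute f A).eq]
    _ = A * (B * A) + cstar B * (A * cstar A) := by
        rw [add_mul, cstar_mul, mul_assoc, mul_assoc, cstar_mul_self]
    _ = A * (B * A) + A * cstar A * cstar B := by rw [hg, (qPoly_commute g _).eq]
    _ = A * (B * A + cstar (B * A)) := by rw [mul_add, cstar_mul B, mul_assoc]

theorem dPoly_eq_map (f : ℝ[X]) : dPoly f = f.map (algebraMap ℝ DHq) := by
  rw [dPoly, dhQ, qPoly, Polynomial.map_map]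
  rfl

theorem dPoly_commute (f : ℝ[X]) (A : DHq[X]) : Commute (dPoly f) A :=
  dPoly_eq_map f ▸ commute_map_algebraMap f A

theorem dPoly_mul (f g : ℝ[X]) : dPoly (f * g) = dPoly f * dPoly g := by
  simp only [dPoly_eq_map, Polynomial.map_mul]

theorem monic_dPoly (hf : f.Monic) : (dPoly f).Monic :=
  dPoly_eq_map f ▸ hf.map _

end RealPolynomial

noncomputable section DualQuaternionPolynomial

theorem star_def (x : DHq) : star x = inl (star x.fst) + inr (star x.snd) :=
  rfl

@[simp]
theorem fst_star (x : DHq) : (star x).fst = star x.fst := by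
  simp [star_def]

@[simp]
theorem snd_star (x : DHq) : (star x).snd = star x.snd := by
  simp [star_def]

instance : StarRing DHq where
  star_involutive x := by ext1 <;> simp
  star_mul x y := by ext1 <;> simp [add_comm]
  star_add x y := by ext1 <;> simp

theorem coeff_mp (P D : Hq[X]) (n : ℕ) : (mp P D).coeff n = inl (P.coeff n) + inr (D.coeff n) := by
  ext <;> simp [mp, dhQ]

theorem mp_mul (P D P' D' : Hq[X]) : mp P D * mp P' D' = mp (P * P') (P * D' + D * P') := by
  have hε (A : DHq[X]) : Commute (C ε) A := by
    ext1 n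
    simp [(DualNumber.commute_eps_left (A.coeff n)).eq]
  have hεε : (C ε * C ε : DHq[X]) = 0 := by
    rw [← C_mul, DualNumber.eps_mul_eps, C_0]
  have hdrop : C ε * dhQ D * (C ε * dhQ D') = 0 := by
    rw [mul_assoc, ← mul_assoc (dhQ D), ← (hε (dhQ D)).eq, mul_assoc, ← mul_assoc, hεε, zero_mul]
  simp only [mp, add_mul, mul_add, hdrop]
  simp only [dhQ, Polynomial.map_mul, Polynomial.map_add, mul_add, add_zero, ← mul_assoc,
    (hε (P.map _)).eq]
  abel

theorem mp_injective2 : Function.Injective2 mp := by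
  intro P P' D D' h
  have hn (n : ℕ) := congrArg (coeff · n) h
  simp only [coeff_mp] at hn
  exact ⟨ext fun n => by simpa using congrArg fst (hn n),
    ext fun n => by simpa using congrArg snd (hn n)⟩

@[simp]
theorem cstar_mp (P D : Hq[X]) : cstar (mp P D) = mp (cstar P) (cstar D) := by
  ext n <;> simp [coeff_mp]

theorem dPoly_eq_mp (f : ℝ[X]) : dPoly f = mp (qPoly f) 0 := by
  simp [dPoly, mp, dhQ]

theorem cstar_dPoly (f : ℝ[X]) : cstar (dPoly f) = dPoly f := by
  simp [dPoly_eq_mp]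

theorem primal_mp (P D : Hq[X]) : primal (mp P D) = P := by
  ext1 n
  simp [primal, coeff_mp]

theorem X_sub_C_inl (p : Hq) : (X - C (inl p) : DHq[X]) = mp (X - C p) 0 := by
  simp [mp, dhQ]

end DualQuaternionPolynomial

section Factorization

variable {M M' : DHq[X]}

theorem hasLinFact_one : HasLinFact 1 :=
  ⟨[], by simp, by simp⟩

theorem hasLinFact_X_sub_C {h : DHq} (hh : IsMotion (X - C h)) : HasLinFact (X - C h) :=
  ⟨[h], by simpa using hh, by simp⟩

theorem HasLinFact.mul (hM : HasLinFact M) (hM' : HasLinFact M') : HasLinFact (M * M') := by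
  obtain ⟨L, hL, rfl⟩ := hM
  obtain ⟨L', hL', rfl⟩ := hM'
  exact ⟨L ++ L', fun h hh => (List.mem_append.1 hh).elim (hL h) (hL' h), by simp⟩

theorem HasLinFact.induction {p : DHq[X] → Prop} (one : p 1)
    (linear_mul : ∀ h M, IsMotion (X - C h) → p M → p ((X - C h) * M)) (hM : HasLinFact M) :
    p M := by
  obtain ⟨L, hL, rfl⟩ := hM
  induction L with
  | nil => simpa using one
  | cons h L ih =>
    rw [List.forall_mem_cons] at hL
    simpa using linear_mul h _ hL.1 (ih hL.2)

protected theorem HasLinFact.cstar (hM : HasLinFact M) : HasLinFact (cstar M) := by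
  refine hM.induction (p := fun M => HasLinFact (cstar M)) ?_ fun h M hh hM => ?_
  · rw [cstar_one]
    exact hasLinFact_one
  · rw [cstar_mul]
    refine hM.mul ?_
    have hlin : cstar (X - C h) = X - C (star h) := by simp
    rw [hlin]
    refine hasLinFact_X_sub_C ?_
    obtain ⟨f, hf, hnorm⟩ := hh
    refine ⟨f, hf, ?_⟩
    rw [← hlin, cstar_cstar]
    exact mul_swap_eq_of_commute (monic_X_sub_C h).isRegular.left (dPoly_commute f _) hnorm

theorem HasLinFact.conj {a : DHq} (ha : a ∈ unitary DHq) (hM : HasLinFact M) :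
    HasLinFact (C a * M * C (star a)) := by
  have conj_mul (A B : DHq[X]) :
      C a * (A * B) * C (star a) = C a * A * C (star a) * (C a * B * C (star a)) := by
    simp only [mul_assoc]
    rw [← mul_assoc (C (star a)) (C a), C_star_mul_C ha, one_mul]
  refine hM.induction (p := fun M => HasLinFact (C a * M * C (star a))) ?_ fun h M hh hM => ?_
  · rw [mul_one, C_mul_C_star ha]
    exact hasLinFact_one
  · rw [conj_mul]
    refine .mul ?_ hM
    have hlin : C a * (X - C h) * C (star a) = X - C (a * h * star a) := by
      rw [mul_sub, sub_mul, ← (commute_X (C a)).eq, mul_assoc, C_mul_C_star ha, mul_one, C_mul,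
        C_mul]
    obtain ⟨f, hf, hnorm⟩ := hh
    rw [hlin]
    refine hasLinFact_X_sub_C ⟨f, hf, ?_⟩
    rw [← hlin]
    exact conj_mul_cstar_conj ha (dPoly_commute f _) hnorm

theorem hasLinFact_conj_iff {a : DHq} (ha : a ∈ unitary DHq) :
    HasLinFact (C a * M * C (star a)) ↔ HasLinFact M := by
  refine ⟨fun hM => ?_, .conj ha⟩
  have := HasLinFact.conj (Unitary.star_mem ha) hM
  rwa [star_star, mul_assoc, mul_assoc, C_star_mul_C ha, mul_one, ← mul_assoc, C_star_mul_C ha,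
    one_mul] at this

theorem one_add_inr_mem_unitary {u : Hq} (hu : star u = -u) : (1 + inr u : DHq) ∈ unitary DHq := by
  refine Unitary.mem_iff.2 ⟨?_, ?_⟩ <;> ext1 <;> simp [hu]

theorem star_one_add_inr {u : Hq} (hu : star u = -u) : star (1 + inr u : DHq) = 1 - inr u := by
  ext1 <;> simp [hu]

theorem C_mul_mp_mul_C (u : Hq) (P D : Hq[X]) :
    C (1 + inr u) * mp P D * C (1 - inr u) = mp P (D + (C u * P - P * C u)) := by
  have hC (v : Hq) : (C (1 + inr v) : DHq[X]) = mp 1 (C v) := by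
    rw [mp, dhQ, dhQ, Polynomial.map_one, map_C, ← C_mul, ← C_1, ← C_add]
    congr 2
    ext1 <;> simp
  rw [sub_eq_add_neg, ← inr_neg, hC, hC, mp_mul, mp_mul, C_neg]
  congr 1 <;> noncomm_ring

end Factorization

section Generic

variable {N : ℝ[X]} {M : DHq[X]}

theorem primal_mul (A B : DHq[X]) : primal (A * B) = primal A * primal B :=
  Polynomial.map_mul _

theorem primal_cstar (A : DHq[X]) : primal (cstar A) = cstar (primal A) := by
  ext1 n
  simp [primal]

theorem primal_dPoly (f : ℝ[X]) : primal (dPoly f) = qPoly f := by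
  rw [dPoly_eq_mp, primal_mp]

theorem natDegree_qPoly (hN : N.Monic) : (qPoly N).natDegree = N.natDegree :=
  hN.natDegree_map _

theorem natDegree_dPoly (hN : N.Monic) : (dPoly N).natDegree = N.natDegree := by
  rw [dPoly_eq_map, hN.natDegree_map]

theorem exists_eq_mul_X_sub_C_of_not_dvd (hN : N.Monic) (hN2 : N.natDegree = 2) {D : Hq[X]}
    (hD : qPoly N ∣ D * cstar D) (hND : ¬ qPoly N ∣ D) :
    ∃ p E, (X - C p) * cstar (X - C p) = qPoly N ∧ D = E * (X - C p) :=
  have hN2' := (natDegree_qPoly hN).trans hN2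
  exists_eq_mul_X_sub_C (hN.map _) hN2' (qPoly_commute N) (cstar_qPoly N) hD
    (coeff_one_modByMonic_ne_zero (hN.map _) hN2' (qPoly_commute N) (cstar_qPoly N) hD
      hND).isUnit

theorem exists_eq_mul_X_sub_C_of_not_dvd_primal (hN : N.Monic) (hN2 : N.natDegree = 2)
    (hM : dPoly N ∣ M * cstar M) (hNM : ¬ qPoly N ∣ primal M) :
    ∃ h E, (X - C h) * cstar (X - C h) = dPoly N ∧ M = E * (X - C h) := by
  refine exists_eq_mul_X_sub_C (monic_dPoly hN) ((natDegree_dPoly hN).trans hN2)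
    (dPoly_commute N) (cstar_dPoly N) hM (TrivSqZeroExt.isUnit_iff_isUnit_fst.2 ?_)
  have hP : qPoly N ∣ primal M * cstar (primal M) := by
    rw [← primal_cstar, ← primal_mul, ← primal_dPoly]
    exact Polynomial.map_dvd _ hM
  have hmod : primal (M %ₘ dPoly N) = primal M %ₘ qPoly N := by
    rw [primal, map_modByMonic _ (monic_dPoly hN), ← primal, ← primal, primal_dPoly]
  have hcoeff : ((M %ₘ dPoly N).coeff 1).fst = (primal M %ₘ qPoly N).coeff 1 := by
    rw [← hmod, primal, coeff_map]
    rfl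
  rw [hcoeff]
  exact (coeff_one_modByMonic_ne_zero (hN.map _) ((natDegree_qPoly hN).trans hN2)
    (qPoly_commute N) (cstar_qPoly N) hP hNM).isUnit

theorem hasLinFact_of_norm_eq {h : DHq} (hN : N.Monic)
    (hh : (X - C h) * cstar (X - C h) = dPoly N) : HasLinFact (X - C h) :=
  hasLinFact_X_sub_C ⟨N, hN.ne_zero, hh⟩

theorem monic_eq_one_of_mul_cstar_eq_one {R : Type*} [Ring R] [StarRing R] {A : R[X]}
    (hA : A.Monic) (h : A * cstar A = 1) : A = 1 := by
  nontriviality R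
  have hdeg := congrArg natDegree h
  rw [hA.natDegree_mul (monic_cstar hA), natDegree_cstar, natDegree_one] at hdeg
  exact hA.natDegree_eq_zero.1 (by lia)

theorem hasLinFact_of_not_dvd_primal (hN : N.Monic) (hN2 : N.natDegree = 2) {k : ℕ}
    (hmonic : M.Monic) (hM : M * cstar M = dPoly (N ^ k)) (hNM : ¬ qPoly N ∣ primal M) :
    HasLinFact M := by
  induction k generalizing M with
  | zero =>
    rw [monic_eq_one_of_mul_cstar_eq_one hmonic (by simpa [dPoly_eq_map] using hM)]
    exact hasLinFact_one
  | succ k ih =>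
    rw [pow_succ', dPoly_mul] at hM
    obtain ⟨h, E, hh, rfl⟩ :=
      exists_eq_mul_X_sub_C_of_not_dvd_primal hN hN2 (hM ▸ dvd_mul_right _ _) hNM
    refine .mul (ih ((monic_X_sub_C h).of_mul_monic_right hmonic) ?_ fun hE => hNM ?_)
      (hasLinFact_of_norm_eq hN hh)
    · rw [mul_mul_cstar_mul (dPoly_commute N E) hh] at hM
      exact (monic_dPoly hN).isRegular.left hM
    · rw [primal_mul]
      exact hE.mul_right _

end Generic

section Roots

variable {N : ℝ[X]}

theorem exists_X_sub_C_mul_cstar_eq (hN : N.Monic) (hN2 : N.natDegree = 2)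
    (hNirr : Irreducible N) : ∃ p : Hq, (X - C p) * cstar (X - C p) = qPoly N := by
  have hroot (x : ℝ) : ¬ N.IsRoot x :=
    hNirr.not_isRoot_of_natDegree_ne_one (by rw [hN2]; decide)
  obtain ⟨z, hz⟩ := IsAlgClosed.exists_aeval_eq_zero ℂ N hNirr.degree_pos.ne'
  have him : z.im ≠ 0 := by
    intro him
    rw [show z = algebraMap ℝ ℂ z.re from Complex.ext rfl him,
      aeval_algebraMap_apply_eq_algebraMap_eval, FaithfulSMul.algebraMap_eq_zero_iff] at hz
    exact hroot _ hz
  have hNz : N = X ^ 2 - C (2 * z.re) * X + C (‖z‖ ^ 2) :=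
    eq_of_monic_of_dvd_of_natDegree_le (by monicity!) hN
      (quadratic_dvd_of_aeval_eq_zero_im_ne_zero N hz him)
      (hN2.trans_le (le_of_eq (by symm; compute_degree!)))
  have hadd : (z : Hq) + star (z : Hq) = algebraMap ℝ Hq (2 * z.re) := Quaternion.self_add_star' _
  have hnorm : Quaternion.normSq (z : Hq) = ‖z‖ ^ 2 := by
    rw [Complex.sq_norm]
    simp [Quaternion.normSq_def', Complex.normSq_apply, sq]
  have hmul : (z : Hq) * star (z : Hq) = algebraMap ℝ Hq (‖z‖ ^ 2) :=
    hnorm ▸ Quaternion.self_mul_star (z : Hq)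
  refine ⟨z, ?_⟩
  calc (X - C (z : Hq)) * cstar (X - C (z : Hq))
      = X ^ 2 - C ((z : Hq) + star (z : Hq)) * X + C ((z : Hq) * star (z : Hq)) := by
        rw [cstar_sub, cstar_X, cstar_C, C_add, C_mul, sub_mul, mul_sub, mul_sub, add_mul,
          (commute_X (C (star (z : Hq)))).eq]
        noncomm_ring
    _ = qPoly N := by
        rw [hadd, hmul, hNz, qPoly]
        simp only [Polynomial.map_add, Polynomial.map_sub, Polynomial.map_mul, Polynomial.map_pow,
          map_X, map_C]

theorem star_ne_self_of_X_sub_C_mul_cstar_eq (hNirr : Irreducible N) {p : Hq}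
    (hp : (X - C p) * cstar (X - C p) = qPoly N) : star p ≠ p := by
  intro hreal
  have hlin : X - C p = qPoly (X - C p.re) := by
    rw [qPoly, Polynomial.map_sub, map_X, map_C]
    exact congrArg (X - C ·) (Quaternion.star_eq_self.1 hreal)
  rw [hlin, cstar_qPoly, ← qPoly_mul] at hp
  rw [← qPoly_injective hp] at hNirr
  exact not_isUnit_X_sub_C _ (or_self_iff.1 (hNirr.isUnit_or_isUnit rfl))

theorem exists_imaginary_mul_eq_mul_star (p : Hq) :
    ∃ d : Hq, d ≠ 0 ∧ star d = -d ∧ p * d = d * star p := by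
  have key (d : Hq) (hre : d.re = 0) (hK : d.imK = 0) (horth : p.imI * d.imI + p.imJ * d.imJ = 0) :
      star d = -d ∧ p * d = d * star p := by
    constructor <;> ext <;> simp [hre, hK] <;> linarith
  by_cases h : p.imI = 0 ∧ p.imJ = 0
  · exact ⟨⟨0, 1, 0, 0⟩, fun hd => one_ne_zero (congrArg QuaternionAlgebra.imI hd),
      key _ rfl rfl (by simp [h.1])⟩
  · exact ⟨⟨0, p.imJ, -p.imI, 0⟩, fun hd => h ⟨neg_eq_zero.1 (congrArg QuaternionAlgebra.imJ hd),
      congrArg QuaternionAlgebra.imI hd⟩, key _ rfl rfl (by ring)⟩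

theorem qPoly_dvd_C_mul_iff {f : ℝ[X]} {A : Hq[X]} {x : Hq} (hx : x ≠ 0) :
    qPoly f ∣ C x * A ↔ qPoly f ∣ A := by
  refine ⟨fun h => ?_, fun h => qPoly_dvd_mul_left h _⟩
  have hA : C x⁻¹ * (C x * A) = A := by
    rw [← mul_assoc, ← C_mul, inv_mul_cancel₀ hx, C_1, one_mul]
  exact hA ▸ qPoly_dvd_mul_left h (C x⁻¹)

theorem qPoly_dvd_of_dvd_X_sub_C_mul {f : ℝ[X]} {A : Hq[X]} {p q : Hq} (hpq : p ≠ q)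
    (hp : qPoly f ∣ (X - C p) * A) (hq : qPoly f ∣ (X - C q) * A) : qPoly f ∣ A := by
  have hsub : C (p - q) * A = (X - C q) * A - (X - C p) * A := by
    rw [C_sub]
    noncomm_ring
  rw [← qPoly_dvd_C_mul_iff (sub_ne_zero.2 hpq), hsub]
  exact dvd_sub hq hp

theorem X_sub_C_dvd_of_qPoly_dvd_mul {p : Hq} {A W : Hq[X]} (hNA : ¬ qPoly N ∣ A)
    (h : qPoly N ∣ A * (X - C p)) (hW : qPoly N ∣ A * W) : X - C p ∣ W := by
  obtain ⟨x, hx⟩ : ∃ x, W %ₘ (X - C p) = C x :=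
    ⟨_, eq_C_of_degree_le_zero (Order.le_of_lt_succ <|
      (degree_modByMonic_lt W (monic_X_sub_C p)).trans_eq (degree_X_sub_C p))⟩
  rw [← modByMonic_eq_zero_iff_dvd (monic_X_sub_C p), hx, C_eq_zero]
  by_contra hx0
  rw [← modByMonic_add_div W (X - C p), hx, mul_add, ← mul_assoc A (X - C p),
    dvd_add_left (h.mul_right _), ← qPoly_dvd_cstar_iff, cstar_mul, cstar_C,
    qPoly_dvd_C_mul_iff (star_ne_zero.2 hx0), qPoly_dvd_cstar_iff] at hW
  exact hNA hW

/- If `Q = E (t - p)` and `N ∣ Q u Q*` for some imaginary `u` with `p u = u p*`, then `N` divides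
both `(t - p) Q*` and `(t - p*) Q*`, hence `(p - p*) Q*`. -/
theorem exists_imaginary_not_dvd_mul_C_mul_cstar (hN : N.Monic) (hN2 : N.natDegree = 2)
    (hNirr : Irreducible N) {Q : Hq[X]} (hQ : qPoly N ∣ Q * cstar Q) (hNQ : ¬ qPoly N ∣ Q) :
    ∃ u : Hq, star u = -u ∧ ¬ qPoly N ∣ Q * C u * cstar Q := by
  obtain ⟨p, E, hp, rfl⟩ := exists_eq_mul_X_sub_C_of_not_dvd hN hN2 hQ hNQ
  set Q := E * (X - C p) with hQE
  obtain ⟨u, hu0, hus, hpu⟩ := exists_imaginary_mul_eq_mul_star p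
  refine ⟨u, hus, fun h => hNQ ?_⟩
  have hstar : cstar (X - C p) = X - C (star p) := by simp
  have hcomm : C u * (X - C (star p)) = (X - C p) * C u := by
    rw [mul_sub, sub_mul, ← (commute_X (C u)).eq, ← C_mul, ← C_mul, hpu]
  obtain ⟨Y, hY⟩ : X - C (star p) ∣ C u * cstar Q := by
    refine X_sub_C_dvd_of_qPoly_dvd_mul hNQ ?_ (by rwa [← mul_assoc])
    rw [← hstar, hQE, mul_assoc, hp]
    exact qPoly_dvd_mul_left dvd_rfl E
  have hdvd_star : qPoly N ∣ (X - C (star p)) * cstar Q := by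
    rw [← qPoly_dvd_C_mul_iff hu0, ← mul_assoc, hcomm, mul_assoc, hY, ← mul_assoc, ← hstar, hp]
    exact dvd_mul_right _ _
  have hdvd : qPoly N ∣ (X - C p) * cstar Q := by
    rw [hQE, cstar_mul, ← mul_assoc, hp]
    exact dvd_mul_right _ _
  exact qPoly_dvd_cstar_iff.1 <| qPoly_dvd_of_dvd_X_sub_C_mul
    (star_ne_self_of_X_sub_C_mul_cstar_eq hNirr hp).symm hdvd hdvd_star

end Roots

/-- The motion polynomial `N ^ m * Q + ε D` is monic, has norm polynomial `N ^ n`, and `N ^ m` is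
the full power of `N` in its primal part. -/
structure IsPrimary (N : ℝ[X]) (n m : ℕ) (Q D : Hq[X]) : Prop where
  monic : (mp (qPoly (N ^ m) * Q) D).Monic
  norm : mp (qPoly (N ^ m) * Q) D * cstar (mp (qPoly (N ^ m) * Q) D) = dPoly (N ^ n)
  not_dvd : ¬ qPoly N ∣ Q

/-- The divisibility condition `c * g ∣ D * D*` for `c = N ^ m` and `g = N ^ j`. Instead of
requiring `N ^ j` to divide both `D * Q*` and `Q* * D` we only keep the maximality of `j`, which
is the part of the definition of `g` that survives splitting off a right factor. -/
def DivCond (N : ℝ[X]) (m : ℕ) (Q D : Hq[X]) : Prop :=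
  ∃ j ≤ m, qPoly (N ^ (m + j)) ∣ D * cstar D ∧
    (j < m → qPoly (N ^ (j + 1)) ∣ D * cstar Q → ¬ qPoly (N ^ (j + 1)) ∣ cstar Q * D)

section Primary

variable {N : ℝ[X]} {n m : ℕ} {Q D : Hq[X]}

theorem qPoly_pow_dvd_qPoly_pow {k l : ℕ} (h : k ≤ l) : qPoly (N ^ k) ∣ qPoly (N ^ l) := by
  rw [qPoly_pow, qPoly_pow]
  exact pow_dvd_pow _ h

theorem qPoly_pow_add_dvd_iff (hN : N.Monic) {k l : ℕ} {A : Hq[X]} :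
    qPoly (N ^ (k + l)) ∣ qPoly (N ^ k) * A ↔ qPoly (N ^ l) ∣ A := by
  rw [pow_add, qPoly_mul, mul_dvd_mul_iff_left (qPoly_ne_zero (hN.pow k).ne_zero)]

theorem qPoly_pow_succ_dvd_iff (hN : N.Monic) {k : ℕ} {A : Hq[X]} :
    qPoly (N ^ (k + 1)) ∣ qPoly N * A ↔ qPoly (N ^ k) ∣ A := by
  rw [add_comm k 1, ← qPoly_pow_add_dvd_iff hN (k := 1) (l := k), pow_one]

theorem X_sub_C_inl_mul_cstar {p : Hq} (hp : (X - C p) * cstar (X - C p) = qPoly N) :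
    (X - C (inl p) : DHq[X]) * cstar (X - C (inl p)) = dPoly N := by
  rw [X_sub_C_inl, cstar_mp, mp_mul, hp, dPoly_eq_mp, cstar_zero, mul_zero, zero_mul, add_zero]

theorem exists_sq_mul_eq_of_norm_eq {c F : ℝ[X]}
    (h : mp (qPoly c * Q) D * cstar (mp (qPoly c * Q) D) = dPoly F) :
    ∃ f, Q * cstar Q = qPoly f ∧ c ^ 2 * f = F := by
  obtain ⟨f, hf⟩ := exists_mul_cstar_eq_qPoly Q
  refine ⟨f, hf, qPoly_injective ?_⟩
  rw [cstar_mp, mp_mul, dPoly_eq_mp] at h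
  rw [← (mp_injective2 h).1, mul_mul_cstar_mul (qPoly_commute f _) hf, cstar_qPoly, ← qPoly_mul,
    ← qPoly_mul, sq, mul_comm]

namespace IsPrimary

theorem exists_norm_eq (hP : IsPrimary N n m Q D) (hN : N.Monic) (hNu : ¬ IsUnit N) :
    ∃ k, n = 2 * m + k ∧ Q * cstar Q = qPoly (N ^ k) := by
  obtain ⟨f, hf, hnorm⟩ := exists_sq_mul_eq_of_norm_eq hP.norm
  rw [← pow_mul'] at hnorm
  obtain ⟨k, rfl⟩ := Nat.exists_eq_add_of_le <|
    (pow_dvd_pow_iff hN.ne_zero hNu).1 (Dvd.intro _ hnorm)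
  rw [pow_add] at hnorm
  exact ⟨k, rfl, hf.trans (congrArg qPoly (mul_left_cancel₀ (hN.pow _).ne_zero hnorm))⟩

theorem mul_cstar_eq_neg (hP : IsPrimary N n m Q D) (hN : N.Monic) :
    Q * cstar D = -(D * cstar Q) := by
  have h := hP.norm
  rw [cstar_mp, mp_mul, dPoly_eq_mp] at h
  refine eq_neg_of_add_eq_zero_left (mul_left_cancel₀ (qPoly_ne_zero (hN.pow m).ne_zero) ?_)
  rw [mul_zero, ← (mp_injective2 h).2, cstar_mul, cstar_qPoly, mul_add, mul_assoc, ← mul_assoc D,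
    (qPoly_commute (N ^ m) (D * cstar Q)).eq]

protected theorem cstar (hP : IsPrimary N n m Q D) : IsPrimary N n m (cstar Q) (cstar D) := by
  have hM : mp (qPoly (N ^ m) * cstar Q) (cstar D) = cstar (mp (qPoly (N ^ m) * Q) D) := by
    rw [cstar_mp, cstar_mul, cstar_qPoly, (qPoly_commute _ _).eq]
  refine ⟨hM ▸ monic_cstar hP.monic, ?_, mt qPoly_dvd_cstar_iff.1 hP.not_dvd⟩
  rw [hM, cstar_cstar]
  exact mul_swap_eq_of_commute hP.monic.isRegular.left (dPoly_commute _ _) hP.norm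

theorem of_mul_right {e m' : ℕ} {Q' D' : Hq[X]} {L : DHq[X]} (hP : IsPrimary N (n + e) m Q D)
    (hN : N.Monic) (hL : L.Monic) (hLnorm : L * cstar L = dPoly (N ^ e))
    (hQ' : ¬ qPoly N ∣ Q')
    (hM : mp (qPoly (N ^ m) * Q) D = mp (qPoly (N ^ m') * Q') D' * L) :
    IsPrimary N n m' Q' D' := by
  refine ⟨hL.of_mul_monic_right (hM ▸ hP.monic), ?_, hQ'⟩
  have hnorm := hP.norm
  rw [hM, mul_mul_cstar_mul (dPoly_commute _ _) hLnorm, add_comm, pow_add, dPoly_mul] at hnorm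
  exact (monic_dPoly (hN.pow e)).isRegular.left hnorm

/-- Conjugation by the translation `1 + ε u`. -/
theorem translate {u : Hq} (hu : star u = -u) (hP : IsPrimary N n m Q D) :
    IsPrimary N n m Q (D + (C u * (qPoly (N ^ m) * Q) - qPoly (N ^ m) * Q * C u)) := by
  have ha := one_add_inr_mem_unitary hu
  have hM := C_mul_mp_mul_C u (qPoly (N ^ m) * Q) D
  rw [← star_one_add_inr hu] at hM
  refine ⟨?_, ?_, hP.not_dvd⟩
  · rw [← hM]
    exact monic_C_mul_mul_C (Unitary.mul_star_self_of_mem ha) hP.monic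
  · rw [← hM]
    exact conj_mul_cstar_conj ha (dPoly_commute _ _) hP.norm

theorem exists_eq_mul_dPoly (hN : N.Monic) (hNu : ¬ IsUnit N)
    (hP : IsPrimary N n (m + 1) Q D) (hD : qPoly N ∣ D) (hdiv : DivCond N (m + 1) Q D) :
    ∃ n' E, n = n' + 2 ∧ IsPrimary N n' m Q E ∧ DivCond N m Q E ∧
      mp (qPoly (N ^ (m + 1)) * Q) D = mp (qPoly (N ^ m) * Q) E * dPoly N := by
  obtain ⟨E, rfl⟩ := hD
  obtain ⟨k, rfl, -⟩ := hP.exists_norm_eq hN hNu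
  have hM : mp (qPoly (N ^ (m + 1)) * Q) (qPoly N * E) =
      mp (qPoly (N ^ m) * Q) E * dPoly N := by
    rw [dPoly_eq_mp, mp_mul, mul_zero, zero_add, ← (qPoly_commute N _).eq, ← (qPoly_commute N _).eq,
      pow_succ', qPoly_mul, mul_assoc]
  have hEQ : qPoly N * E * cstar Q = qPoly N * (E * cstar Q) := mul_assoc _ _ _
  have hQE : cstar Q * (qPoly N * E) = qPoly N * (cstar Q * E) := by
    rw [← mul_assoc, ← (qPoly_commute N _).eq, mul_assoc]
  refine ⟨2 * m + k, E, by ring, ?_, ?_, hM⟩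
  · have hnorm : dPoly N * cstar (dPoly N) = dPoly (N ^ 2) := by
      rw [cstar_dPoly, ← dPoly_mul, sq]
    exact of_mul_right (e := 2) (by convert hP using 1; ring) hN (monic_dPoly hN) hnorm
      hP.not_dvd hM
  · obtain ⟨j, hj, hDD, hmax⟩ := hdiv
    rw [hEQ, hQE] at hmax
    cases j with
    | zero =>
      rw [zero_add, pow_one] at hmax
      exact absurd (dvd_mul_right _ _) (hmax m.succ_pos (dvd_mul_right _ _))
    | succ j =>
      refine ⟨j, by lia, ?_, fun hjm => ?_⟩
      · have hEE : qPoly N * E * cstar (qPoly N * E) =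
            qPoly N * (qPoly N * (E * cstar E)) := by
          rw [cstar_mul, cstar_qPoly, ← (qPoly_commute N (cstar E)).eq, mul_assoc, ← mul_assoc E,
            ← (qPoly_commute N E).eq, mul_assoc]
        rwa [hEE, show m + 1 + (j + 1) = m + j + 1 + 1 by ring, qPoly_pow_succ_dvd_iff hN,
          qPoly_pow_succ_dvd_iff hN] at hDD
      · simpa only [qPoly_pow_succ_dvd_iff hN] using hmax (by lia)

theorem of_mul_X_sub_C {m' : ℕ} {Q' E : Hq[X]} {p : Hq} (hN : N.Monic)
    (hp : (X - C p) * cstar (X - C p) = qPoly N) (hP : IsPrimary N (n + 1) m Q (E * (X - C p)))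
    (hQ' : ¬ qPoly N ∣ Q') (h : qPoly (N ^ m) * Q = qPoly (N ^ m') * Q' * (X - C p)) :
    IsPrimary N n m' Q' E ∧
      mp (qPoly (N ^ m) * Q) (E * (X - C p)) = mp (qPoly (N ^ m') * Q') E * (X - C (inl p)) := by
  have hM : mp (qPoly (N ^ m) * Q) (E * (X - C p)) =
      mp (qPoly (N ^ m') * Q') E * (X - C (inl p)) := by
    rw [X_sub_C_inl, mp_mul, h, mul_zero, zero_add]
  refine ⟨hP.of_mul_right hN (monic_X_sub_C _) ?_ hQ' hM, hM⟩
  rw [X_sub_C_inl_mul_cstar hp, pow_one]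

/- With `D = E (t - p)` and `N = (t - p)(t - p)*`, the factor `t - p` also splits off on the right
of `N ^ (m + 1) * Q`: either from `Q` if `N ∣ Q (t - p)*`, or from `N`. -/
theorem exists_eq_mul_X_sub_C_of_right (hN : N.Monic) (hN2 : N.natDegree = 2)
    (hP : IsPrimary N (n + 1) (m + 1) Q D) (hD : ¬ qPoly N ∣ D) {j : ℕ} (hjm : j ≤ m + 1)
    (hDD : qPoly (N ^ (m + 1 + j)) ∣ D * cstar D) (hDQ : ¬ qPoly (N ^ (j + 1)) ∣ D * cstar Q) :
    ∃ m' Q' E p, IsPrimary N n m' Q' E ∧ DivCond N m' Q' E ∧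
      (X - C p) * cstar (X - C p) = qPoly N ∧
      mp (qPoly (N ^ (m + 1)) * Q) D = mp (qPoly (N ^ m') * Q') E * (X - C (inl p)) := by
  have hdvd : qPoly N ∣ D * cstar D := by
    simpa only [pow_one] using (qPoly_pow_dvd_qPoly_pow (by lia : 1 ≤ m + 1 + j)).trans hDD
  obtain ⟨p, E, hp, rfl⟩ := exists_eq_mul_X_sub_C_of_not_dvd hN hN2 hdvd hD
  rw [mul_mul_cstar_mul (qPoly_commute N E) hp, add_right_comm, qPoly_pow_succ_dvd_iff hN] at hDD
  have hp' : cstar (X - C p) * (X - C p) = qPoly N := by rw [cstar_mul_self, hp]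
  by_cases hQp : qPoly N ∣ Q * cstar (X - C p)
  · obtain ⟨Q', hQ'⟩ := hQp
    obtain rfl : Q = Q' * (X - C p) := by
      refine mul_left_cancel₀ (qPoly_ne_zero hN.ne_zero) ?_
      rw [← mul_assoc, ← hQ', mul_assoc, hp', (qPoly_commute N Q).eq]
    obtain ⟨hP', hM⟩ := of_mul_X_sub_C hN hp hP (fun h => hP.not_dvd (h.mul_right _))
      (mul_assoc (qPoly (N ^ (m + 1))) Q' (X - C p)).symm
    refine ⟨m + 1, Q', E, p, hP', ?_, hp, hM⟩
    have hEQ : E * (X - C p) * cstar (Q' * (X - C p)) = qPoly N * (E * cstar Q') := by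
      rw [cstar_mul, mul_assoc, ← mul_assoc (X - C p), hp, ← mul_assoc, ← (qPoly_commute N E).eq,
        mul_assoc]
    rw [hEQ, qPoly_pow_succ_dvd_iff hN] at hDQ
    cases j with
    | zero => exact absurd (by simp) hDQ
    | succ j => exact ⟨j, by lia, by rwa [add_right_comm], fun _ h => absurd h hDQ⟩
  · have hfac : qPoly (N ^ (m + 1)) * Q = qPoly (N ^ m) * (Q * cstar (X - C p)) * (X - C p) := by
      rw [mul_assoc, mul_assoc Q, hp', ← (qPoly_commute N Q).eq, ← mul_assoc, ← qPoly_mul, pow_succ]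
    obtain ⟨hP', hM⟩ := of_mul_X_sub_C hN hp hP hQp hfac
    refine ⟨m, _, E, p, hP', ?_, hp, hM⟩
    have hEQ : E * cstar (Q * cstar (X - C p)) = E * (X - C p) * cstar Q := by
      rw [cstar_mul, cstar_cstar, mul_assoc]
    rcases hjm.lt_or_eq with hlt | rfl
    · exact ⟨j, Nat.le_of_lt_succ hlt, hDD, fun _ h => absurd (hEQ ▸ h) hDQ⟩
    · exact ⟨m, le_rfl, (qPoly_pow_dvd_qPoly_pow (by lia)).trans hDD,
        fun h => absurd h (lt_irrefl m)⟩

end IsPrimary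

theorem qPoly_dvd_mul_cstar_commutator_add {f : ℝ[X]} {u : Hq} (hu : star u = -u)
    (hQD : Q * cstar D = -(D * cstar Q)) (hright : qPoly f ∣ D * cstar Q)
    (hleft : qPoly f ∣ cstar Q * D) :
    qPoly f ∣ D * cstar (C u * Q - Q * C u) + (C u * Q - Q * C u) * cstar D := by
  have expand : D * cstar (C u * Q - Q * C u) + (C u * Q - Q * C u) * cstar D =
      D * (C u * cstar Q) + cstar (D * (C u * cstar Q)) - D * cstar Q * C u +
        C u * (Q * cstar D) := by
    simp only [cstar_sub, cstar_mul, cstar_C, cstar_cstar, hu, C_neg]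
    noncomm_ring
  rw [expand, mul_add_cstar_mul_comm, hQD, mul_assoc (C u)]
  have h := qPoly_dvd_mul_left hleft (C u)
  exact dvd_add (dvd_sub (dvd_add h (qPoly_dvd_cstar_iff.2 h)) (hright.mul_right _))
    (qPoly_dvd_mul_left (dvd_neg.2 hright) _)

theorem qPoly_pow_dvd_translate_mul_cstar {u : Hq} (hu : star u = -u)
    (hQD : Q * cstar D = -(D * cstar Q)) (hright : qPoly (N ^ m) ∣ D * cstar Q)
    (hleft : qPoly (N ^ m) ∣ cstar Q * D) (hDD : qPoly (N ^ (m + m)) ∣ D * cstar D) :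
    qPoly (N ^ (m + m)) ∣ (D + qPoly (N ^ m) * (C u * Q - Q * C u)) *
      cstar (D + qPoly (N ^ m) * (C u * Q - Q * C u)) := by
  set W := C u * Q - Q * C u
  have hdvd : qPoly (N ^ m) ∣ D * cstar W + W * cstar D + qPoly (N ^ m) * (W * cstar W) :=
    dvd_add (qPoly_dvd_mul_cstar_commutator_add hu hQD hright hleft) (dvd_mul_right _ _)
  have expand : (D + qPoly (N ^ m) * W) * cstar (D + qPoly (N ^ m) * W) = D * cstar D +
      qPoly (N ^ m) * (D * cstar W + W * cstar D + qPoly (N ^ m) * (W * cstar W)) := by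
    rw [cstar_add, cstar_mul, cstar_qPoly, mul_add _ (cstar D), ← mul_assoc _ (cstar W),
      ← (qPoly_commute _ (_ * cstar W)).eq]
    noncomm_ring
  rw [expand]
  refine dvd_add hDD ?_
  rw [pow_add, qPoly_mul]
  exact mul_dvd_mul_left _ hdvd

theorem not_qPoly_pow_succ_dvd_translate_mul_cstar (hN : N.Monic) {u : Hq}
    (hright : qPoly (N ^ (m + 1)) ∣ D * cstar Q) (hQQ : qPoly N ∣ Q * cstar Q)
    (hQuQ : ¬ qPoly N ∣ Q * C u * cstar Q) :
    ¬ qPoly (N ^ (m + 1)) ∣ (D + qPoly (N ^ m) * (C u * Q - Q * C u)) * cstar Q := by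
  rw [add_mul, mul_assoc (qPoly _), dvd_add_right hright, qPoly_pow_add_dvd_iff hN, pow_one,
    sub_mul, mul_assoc (C u), dvd_sub_right (qPoly_dvd_mul_left hQQ _)]
  exact hQuQ

theorem IsPrimary.exists_translate_not_dvd (hN : N.Monic) (hN2 : N.natDegree = 2)
    (hNirr : Irreducible N) (hP : IsPrimary N n (m + 1) Q D) (hD : ¬ qPoly N ∣ D)
    (hDD : qPoly (N ^ (m + 1 + (m + 1))) ∣ D * cstar D)
    (hright : qPoly (N ^ (m + 1 + 1)) ∣ D * cstar Q)
    (hleft : qPoly (N ^ (m + 1 + 1)) ∣ cstar Q * D) :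
    ∃ u W, star u = -u ∧ C u * (qPoly (N ^ (m + 1)) * Q) - qPoly (N ^ (m + 1)) * Q * C u = W ∧
      ¬ qPoly N ∣ D + W ∧ qPoly (N ^ (m + 1 + (m + 1))) ∣ (D + W) * cstar (D + W) ∧
      ¬ qPoly (N ^ (m + 1 + 1)) ∣ (D + W) * cstar Q := by
  have hN_dvd {k : ℕ} {A : Hq[X]} (h : qPoly (N ^ (k + 1)) ∣ A) : qPoly N ∣ A := by
    simpa only [pow_one] using (qPoly_pow_dvd_qPoly_pow k.succ_pos).trans h
  have hQQ : qPoly N ∣ Q * cstar Q := by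
    obtain ⟨k, -, hk⟩ := hP.exists_norm_eq hN hNirr.not_isUnit
    cases k with
    | zero =>
      rw [pow_zero, qPoly_one, ← cstar_mul_self] at hk
      refine absurd ?_ hD
      rw [← mul_one D, ← hk, ← mul_assoc]
      exact (hN_dvd hright).mul_right _
    | succ k => exact hN_dvd (k := k) hk.symm.dvd
  obtain ⟨u, hu, hQuQ⟩ := exists_imaginary_not_dvd_mul_C_mul_cstar hN hN2 hNirr hQQ hP.not_dvd
  have hweak : qPoly (N ^ (m + 1)) ∣ qPoly (N ^ (m + 1 + 1)) :=
    qPoly_pow_dvd_qPoly_pow (Nat.le_succ _)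
  refine ⟨u, qPoly (N ^ (m + 1)) * (C u * Q - Q * C u), hu, ?_, ?_, ?_, ?_⟩
  · rw [mul_sub, ← mul_assoc, ← mul_assoc (qPoly _), ← mul_assoc (qPoly _),
      (qPoly_commute _ (C u)).eq]
  · rwa [dvd_add_left ((hN_dvd dvd_rfl).mul_right _)]
  · exact qPoly_pow_dvd_translate_mul_cstar hu (hP.mul_cstar_eq_neg hN) (hweak.trans hright)
      (hweak.trans hleft) hDD
  · exact not_qPoly_pow_succ_dvd_translate_mul_cstar hN hright hQQ hQuQ

end Primary

section PrimaryFactorization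

variable {N : ℝ[X]}

theorem hasLinFact_dPoly (hN : N.Monic) (hN2 : N.natDegree = 2) (hNirr : Irreducible N) :
    HasLinFact (dPoly N) := by
  obtain ⟨p, hp⟩ := exists_X_sub_C_mul_cstar_eq hN hN2 hNirr
  have hh := X_sub_C_inl_mul_cstar hp
  have hlin := hasLinFact_of_norm_eq hN hh
  exact hh ▸ hlin.mul hlin.cstar

theorem IsPrimary.hasLinFact_of_right (hN : N.Monic) (hN2 : N.natDegree = 2) {n m : ℕ}
    {Q D : Hq[X]} (hP : IsPrimary N n (m + 1) Q D) (hD : ¬ qPoly N ∣ D) {j : ℕ} (hj : j ≤ m + 1)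
    (hDD : qPoly (N ^ (m + 1 + j)) ∣ D * cstar D) (hDQ : ¬ qPoly (N ^ (j + 1)) ∣ D * cstar Q)
    (ih : ∀ n' < n, ∀ {m' : ℕ} {Q' D' : Hq[X]}, IsPrimary N n' m' Q' D' → DivCond N m' Q' D' →
      HasLinFact (mp (qPoly (N ^ m') * Q') D')) :
    HasLinFact (mp (qPoly (N ^ (m + 1)) * Q) D) := by
  have hNu : ¬ IsUnit N := fun h => by simp [natDegree_eq_zero_of_isUnit h] at hN2
  obtain ⟨k, hk, -⟩ := hP.exists_norm_eq hN hNu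
  obtain ⟨n', rfl⟩ := Nat.exists_eq_add_one_of_ne_zero (show n ≠ 0 by lia)
  obtain ⟨m', Q', E, p, hP', hdiv', hp, hM⟩ :=
    hP.exists_eq_mul_X_sub_C_of_right hN hN2 hD hj hDD hDQ
  rw [hM]
  exact (ih n' n'.lt_succ_self hP' hdiv').mul
    (hasLinFact_of_norm_eq hN (X_sub_C_inl_mul_cstar hp))

theorem IsPrimary.hasLinFact (hN : N.Monic) (hN2 : N.natDegree = 2) (hNirr : Irreducible N)
    {n m : ℕ} {Q D : Hq[X]} (hP : IsPrimary N n m Q D) (hdiv : DivCond N m Q D) :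
    HasLinFact (mp (qPoly (N ^ m) * Q) D) := by
  induction n using Nat.strong_induction_on generalizing m Q D with
  | _ n ih =>
  cases m with
  | zero =>
    refine hasLinFact_of_not_dvd_primal hN hN2 hP.monic hP.norm ?_
    rw [primal_mp, pow_zero, qPoly_one, one_mul]
    exact hP.not_dvd
  | succ m =>
  by_cases hD : qPoly N ∣ D
  · obtain ⟨n', E, rfl, hP', hdiv', hM⟩ := hP.exists_eq_mul_dPoly hN hNirr.not_isUnit hD hdiv
    rw [hM]
    exact (ih n' (by lia) hP' hdiv').mul (hasLinFact_dPoly hN hN2 hNirr)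
  obtain ⟨j, hj, hDD, hmax⟩ := hdiv
  by_cases hright : qPoly (N ^ (j + 1)) ∣ D * cstar Q
  swap
  · exact hP.hasLinFact_of_right hN hN2 hD hj hDD hright ih
  by_cases hleft : qPoly (N ^ (j + 1)) ∣ cstar Q * D
  swap
  · have hconj : HasLinFact (mp (qPoly (N ^ (m + 1)) * cstar Q) (cstar D)) := by
      refine hP.cstar.hasLinFact_of_right hN hN2 (mt qPoly_dvd_cstar_iff.1 hD) hj ?_ ?_ ih
      · rwa [cstar_cstar, cstar_mul_self]
      · rwa [← dvd_neg, ← hP.cstar.mul_cstar_eq_neg hN, cstar_cstar]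
    have := hconj.cstar
    rwa [cstar_mp, cstar_mul, cstar_cstar, cstar_cstar, cstar_qPoly, ← (qPoly_commute _ Q).eq]
      at this
  obtain rfl : j = m + 1 := hj.eq_or_lt.resolve_right fun hlt => hmax hlt hright hleft
  obtain ⟨u, W, hu, hW, hD', hDD', hDQ'⟩ :=
    hP.exists_translate_not_dvd hN hN2 hNirr hD hDD hright hleft
  rw [← hasLinFact_conj_iff (one_add_inr_mem_unitary hu), star_one_add_inr hu, C_mul_mp_mul_C, hW]
  exact (hW ▸ hP.translate hu).hasLinFact_of_right hN hN2 hD' le_rfl hDD' hDQ' ih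

end PrimaryFactorization

section RealFactors

variable {N : ℝ[X]}

theorem eq_pow_of_monic_of_dvd_pow (hN : N.Monic) (hNirr : Irreducible N) {f : ℝ[X]} {n : ℕ}
    (hf : f.Monic) (h : f ∣ N ^ n) : ∃ k, f = N ^ k := by
  obtain ⟨k, -, hk⟩ := (dvd_prime_pow hNirr.prime n).1 h
  exact ⟨k, eq_of_monic_of_associated hf (hN.pow k) hk⟩

theorem monic_of_monic_dPoly {f : ℝ[X]} (h : (dPoly f).Monic) : f.Monic := by
  rw [dPoly_eq_map] at h
  exact (FaithfulSMul.algebraMap_injective ℝ DHq).monic_map_iff.2 h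

theorem divCond_of_isMrpf3 (hN : N.Monic) (hNu : ¬ IsUnit N) {m j : ℕ} {Q D : Hq[X]}
    (hg : IsMrpf3 (N ^ j) (N ^ m) (cstar Q * D) (D * cstar Q))
    (hcg : RDvdQ (N ^ m * N ^ j) (D * cstar D)) : DivCond N m Q D := by
  obtain ⟨-, hjm, -, -, hmax⟩ := hg
  refine ⟨j, (pow_dvd_pow_iff hN.ne_zero hNu).1 hjm, pow_add N m j ▸ hcg, fun hlt hr hl => ?_⟩
  have := hmax _ (hN.pow (j + 1)) (pow_dvd_pow N hlt) hl hr
  exact absurd ((pow_dvd_pow_iff hN.ne_zero hNu).1 this) (by lia)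

end RealFactors

theorem primary_sufficiency_general {n : ℕ} {c N g : ℝ[X]} {Q D : Hq[X]}
    (hc : c.Monic) (hmonic : (mp (qPoly c * Q) D).Monic) (hQred : ReducedQ Q)
    (hN2 : N.natDegree = 2) (hNirr : Irreducible N)
    (hnorm : mp (qPoly c * Q) D * cstar (mp (qPoly c * Q) D) = dPoly (N ^ n))
    (hg : IsMrpf3 g c (cstar Q * D) (D * cstar Q))
    (hcg : RDvdQ (c * g) (D * cstar D)) :
    HasLinFact (mp (qPoly c * Q) D) := by
  wlog hN : N.Monic generalizing N
  · have hassoc := normalize_associated N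
    have hmonicN := monic_normalize hNirr.ne_zero
    have hpow : normalize N ^ n = N ^ n := eq_of_monic_of_associated (hmonicN.pow n)
      (monic_of_monic_dPoly (hnorm ▸ hmonic.mul (monic_cstar hmonic))) hassoc.pow_pow
    exact this ((natDegree_eq_of_degree_eq degree_normalize).trans hN2)
      (hassoc.irreducible_iff.2 hNirr) (hpow ▸ hnorm) hmonicN
  have hcN : c ∣ N ^ n := by
    obtain ⟨f, -, hf⟩ := exists_sq_mul_eq_of_norm_eq hnorm
    exact hf ▸ (dvd_pow_self c two_ne_zero).mul_right f
  obtain ⟨m, rfl⟩ := eq_pow_of_monic_of_dvd_pow hN hNirr hc hcN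
  obtain ⟨j, rfl⟩ := eq_pow_of_monic_of_dvd_pow hN hNirr hg.1 hg.2.1
  exact IsPrimary.hasLinFact hN hN2 hNirr
    ⟨hmonic, hnorm, fun h => hNirr.ne_one (hQred N hN h)⟩
    (divCond_of_isMrpf3 hN hNirr.not_isUnit hg hcg)

/-- Sufficiency in the primary norm case: if `c·g` divides `D·D*` then `M` admits a
factorization into monic linear motion polynomial factors. -/
theorem primary_sufficiency
    (n : ℕ) (c : ℝ[X]) (Q D : Hq[X]) (N : ℝ[X]) (M : DHq[X]) (g : ℝ[X])
    (hM : M = mp (qPoly c * Q) D)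
    (hc : c.Monic) (hmonic : M.Monic) (hmotion : IsMotion M)
    (hred : ReducedD M) (hbdd : BoundedD M) (hQred : ReducedQ Q)
    (hdeg : M.natDegree = n)
    (hN2 : N.natDegree = 2) (hNirr : Irreducible N)
    (hQnorm : qPoly (c ^ 2) * (Q * cstar Q) = qPoly (N ^ n))
    (hnorm : M * cstar M = dPoly (N ^ n))
    (hg : IsMrpf3 g c (cstar Q * D) (D * cstar Q))
    (hcg : RDvdQ (c * g) (D * cstar D)) :
    HasLinFact M := by
  subst hM
  exact primary_sufficiency_general hc hmonic hQred hN2 hNirr hnorm hg hcg
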